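/- arXiv:2203.07941 — 2 statements merged into one kernel-verified Lean document; each statement's English description precedes it below -/
import Mathlib

section
/- Let ψ be a 3CNF formula with n propositional variables and m clauses, where clause j consists of three literals ℓ_{j,1}, ℓ_{j,2}, ℓ_{j,3}, each a pair of a variable index i ∈ {1,…,n} and a sign. For x ∈ ℝⁿ let val_{j,k}(x) = x_i if literal ℓ_{j,k} is the positive literal of variable i and val_{j,k}(x) = 1 − x_i if it is the negative literal of variable i. Then there exists x ∈ ℝⁿ such that ReLU(1/2 − x_i) + ReLU(x_i − 1/2) − 1/2 = 0 for every i ∈ {1,…,n} and Σ_{j=1}^{m} (1 − ReLU(1 − val_{j,1}(x) − val_{j,2}(x) − val_{j,3}(x))) = m, if and only if ψ is satisfiable, i.e., there is an assignment α : {1,…,n} → {0,1} such that every clause contains a literal whose variable is assigned 1 if the literal is positive and 0 if it is negative. -/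
/-- The ReLU function. -/
noncomputable def ReLU (x : ℝ) : ℝ := max 0 x

/-- The real value of a literal (a variable index together with a sign, `true`
meaning positive) under a real-valued input `x`: `x i` for the positive
literal of variable `i` and `1 - x i` for the negative one. -/
noncomputable def litVal {n : ℕ} (ℓ : Fin n × Bool) (x : Fin n → ℝ) : ℝ :=
  if ℓ.2 then x ℓ.1 else 1 - x ℓ.1

/-- A boolean assignment satisfies a literal if the variable is assigned `true`
(i.e. 1) when the literal is positive and `false` (i.e. 0) when it is negative. -/
def litSat {n : ℕ} (ℓ : Fin n × Bool) (α : Fin n → Bool) : Prop :=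
  α ℓ.1 = ℓ.2

/-!
The Boolean gadget evaluates to `|x i - 1/2| - 1/2`, so it confines every input to `{0, 1}`, and
admissible inputs are the same as truth assignments. At such an input the literals of a clause sum
to the number of satisfied ones, so the `ReLU` of a clause vanishes exactly when the clause is
satisfied. Each summand of the and-gadget is at most `1`, hence the gadget reaches the number of
clauses only if all clauses are satisfied.
-/

theorem ReLU_nonneg (t : ℝ) : 0 ≤ ReLU t :=
  le_max_left 0 t

theorem ReLU_eq_zero_iff {t : ℝ} : ReLU t = 0 ↔ t ≤ 0 :=
  max_eq_left_iff

theorem ReLU_sub_add_ReLU_sub_eq_abs (a b : ℝ) : ReLU (a - b) + ReLU (b - a) = |b - a| := by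
  rw [← neg_sub b a, add_comm, ReLU, ReLU, max_comm 0, max_comm 0]
  exact max_zero_add_max_neg_zero_eq_abs_self (b - a)

theorem ReLU_add_ReLU_sub_half_eq_zero_iff {t : ℝ} :
    ReLU (1 / 2 - t) + ReLU (t - 1 / 2) - 1 / 2 = 0 ↔ t = 0 ∨ t = 1 := by
  rw [ReLU_sub_add_ReLU_sub_eq_abs, sub_eq_zero, abs_eq (by norm_num), or_comm]
  refine or_congr ?_ ?_ <;> constructor <;> intro h <;> linarith

theorem sum_one_sub_ReLU_eq_card_iff {C : Type*} [Fintype C] (f : C → ℝ) :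
    ∑ j, (1 - ReLU (f j)) = Fintype.card C ↔ ∀ j, f j ≤ 0 := by
  have sum_eq : ∑ j, (1 - ReLU (f j)) = Fintype.card C - ∑ j, ReLU (f j) := by simp
  rw [sum_eq, sub_eq_self, Finset.sum_eq_zero_iff_of_nonneg fun j _ => ReLU_nonneg (f j)]
  simp only [Finset.mem_univ, true_imp_iff, ReLU_eq_zero_iff]

/-- The real vector with entries `0` and `1` that encodes a truth assignment as a network input. -/
def assignmentVec {ι : Type*} (α : ι → Bool) : ι → ℝ :=
  fun i => if α i then 1 else 0

theorem mem_range_assignmentVec_iff {ι : Type*} {x : ι → ℝ} :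
    x ∈ Set.range assignmentVec ↔ ∀ i, x i = 0 ∨ x i = 1 := by
  constructor
  · rintro ⟨α, rfl⟩ i
    cases h : α i <;> simp [assignmentVec, h]
  · intro hx
    refine ⟨fun i => decide (x i = 1), funext fun i => ?_⟩
    rcases hx i with h | h <;> simp [assignmentVec, h]

section Clause

variable {n : ℕ} {K : Type*} [Fintype K]

theorem litVal_assignmentVec (ℓ : Fin n × Bool) (α : Fin n → Bool) :
    litVal ℓ (assignmentVec α) = if α ℓ.1 = ℓ.2 then 1 else 0 := by
  obtain ⟨i, sign⟩ := ℓ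
  cases sign <;> cases h : α i <;> simp [litVal, assignmentVec, h]

theorem sum_litVal_assignmentVec (c : K → Fin n × Bool) (α : Fin n → Bool) :
    ∑ k, litVal (c k) (assignmentVec α) = Finset.card {k | α (c k).1 = (c k).2} := by
  simp only [litVal_assignmentVec, Finset.sum_boole]

theorem one_sub_sum_litVal_nonpos_iff (c : K → Fin n × Bool) (α : Fin n → Bool) :
    1 - ∑ k, litVal (c k) (assignmentVec α) ≤ 0 ↔ ∃ k, litSat (c k) α := by
  rw [sum_litVal_assignmentVec, sub_nonpos, Nat.one_le_cast, Finset.one_le_card,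
    Finset.filter_nonempty_iff]
  simp only [Finset.mem_univ, true_and, litSat]

end Clause

theorem stmt_4_general {n : ℕ} {C : Type*} [Fintype C] {K : C → Type*} [∀ j, Fintype (K j)]
    (lit : (j : C) → K j → Fin n × Bool) :
    (∃ x : Fin n → ℝ,
      (∀ i, ReLU (1 / 2 - x i) + ReLU (x i - 1 / 2) - 1 / 2 = 0) ∧
      ∑ j, (1 - ReLU (1 - ∑ k, litVal (lit j k) x)) = Fintype.card C) ↔
    ∃ α : Fin n → Bool, ∀ j, ∃ k, litSat (lit j k) α := by
  simp only [ReLU_add_ReLU_sub_half_eq_zero_iff, sum_one_sub_ReLU_eq_card_iff,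
    ← mem_range_assignmentVec_iff, Set.exists_range_iff, one_sub_sum_litVal_nonpos_iff]

theorem stmt_4 (n m : ℕ) (lit : Fin m → Fin 3 → Fin n × Bool) :
    (∃ x : Fin n → ℝ,
      (∀ i : Fin n, ReLU (1/2 - x i) + ReLU (x i - 1/2) - 1/2 = 0) ∧
      (∑ j : Fin m,
        (1 - ReLU (1 - litVal (lit j 0) x - litVal (lit j 1) x - litVal (lit j 2) x)))
        = m) ↔
    (∃ α : Fin n → Bool, ∀ j : Fin m, ∃ k : Fin 3, litSat (lit j k) α) := by
  simpa only [Fin.sum_univ_three, ← sub_sub, Fintype.card_fin] using stmt_4_general lit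
end

section
/- Let c, d be positive rationals and define discrete(x) = d − c·ReLU(−c·x) − c·ReLU(d·x) for x ∈ ℝ. Then for every real r, discrete(r) = 0 if and only if r = −d/c² or r = 1/c. -/
/-- The discrete-gadget with parameters `c` and `d`. -/
noncomputable def discreteGadget (c d : ℚ) (x : ℝ) : ℝ :=
  (d : ℝ) - (c : ℝ) * ReLU (-(c : ℝ) * x) - (c : ℝ) * ReLU ((d : ℝ) * x)

/-! The arguments of the two ReLUs never have the same strict sign, so the subtracted terms add up
to the maximum of the lines `-c² x` and `c d x`. This V-shaped function with minimum `0` at the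
origin takes the positive value `d` exactly once on each branch. -/

lemma max_zero_add_max_zero_of_mul_nonpos {R : Type*} [Ring R] [LinearOrder R]
    [IsStrictOrderedRing R] {a b : R} (hab : a * b ≤ 0) :
    max 0 a + max 0 b = max a b := by
  rcases mul_nonpos_iff.mp hab with ⟨ha, hb⟩ | ⟨ha, hb⟩
  · rw [max_eq_right ha, max_eq_left hb, add_zero, max_eq_left (hb.trans ha)]
  · rw [max_eq_left ha, max_eq_right hb, zero_add, max_eq_right (ha.trans hb)]

section OrderedField

variable {K : Type*} [Field K] [LinearOrder K] [IsStrictOrderedRing K]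

lemma max_mul_mul_eq_iff {p q t x : K} (hp : p < 0) (hq : 0 < q) (ht : 0 ≤ t) :
    max (p * x) (q * x) = t ↔ x = t / p ∨ x = t / q := by
  have right_le_left (h : p * x = t) : q * x ≤ p * x :=
    have hx : x ≤ 0 := nonpos_of_mul_nonneg_right (h ▸ ht) hp
    mul_le_mul_of_nonpos_right (hp.trans hq).le hx
  have left_le_right (h : q * x = t) : p * x ≤ q * x :=
    have hx : 0 ≤ x := nonneg_of_mul_nonneg_right (h ▸ ht) hq
    mul_le_mul_of_nonneg_right (hp.trans hq).le hx
  rw [max_eq_iff, and_iff_left_of_imp right_le_left, and_iff_left_of_imp left_le_right,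
    eq_div_iff hp.ne, eq_div_iff hq.ne', mul_comm x p, mul_comm x q]

theorem stmt_10_general {c d : K} (hc : 0 < c) (hd : 0 < d) (r : K) :
    d - c * max 0 (-c * r) - c * max 0 (d * r) = 0 ↔ r = -d / c ^ 2 ∨ r = 1 / c := by
  have opposite_signs : (-c ^ 2 * r) * (c * d * r) ≤ 0 := by
    have : 0 ≤ c ^ 3 * d * r ^ 2 := by positivity
    linear_combination this
  have sum_eq_max : c * max 0 (-c * r) + c * max 0 (d * r) = max (-c ^ 2 * r) (c * d * r) := by
    rw [← max_zero_add_max_zero_of_mul_nonpos opposite_signs, mul_max_of_nonneg _ _ hc.le,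
      mul_max_of_nonneg _ _ hc.le]
    ring_nf
  calc d - c * max 0 (-c * r) - c * max 0 (d * r) = 0
      ↔ max (-c ^ 2 * r) (c * d * r) = d := by rw [← sum_eq_max, sub_sub, sub_eq_zero, eq_comm]
    _ ↔ r = d / -c ^ 2 ∨ r = d / (c * d) :=
      max_mul_mul_eq_iff (neg_neg_of_pos (pow_pos hc 2)) (mul_pos hc hd) hd.le
    _ ↔ r = -d / c ^ 2 ∨ r = 1 / c := by
      rw [div_neg, ← neg_div, div_mul_cancel_right₀ hd.ne', one_div]

end OrderedField

theorem stmt_10 (c d : ℚ) (hc : 0 < c) (hd : 0 < d) (r : ℝ) :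
    discreteGadget c d r = 0 ↔ r = -(d : ℝ) / (c : ℝ)^2 ∨ r = 1 / (c : ℝ) :=
  stmt_10_general (Rat.cast_pos.mpr hc) (Rat.cast_pos.mpr hd) r
end
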